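/- arXiv:1506.06583 — 3 statements merged into one kernel-verified Lean document; each statement's English description precedes it below -/
import Mathlib

section
/- Let S be a nonempty bounded subset of ℝ³ and for ε > 0 set Θ_ε = {x ∈ ℝ³ : dist(x,S) < ε}. Let R > 1 be such that Θ₁ is contained in the ball of radius R centered at the origin. Then for every δ ∈ (0,1] and every α < 0 one has ∫_{ℝ³∖Θ_δ} e^{α·dist(x,S)} dx ≤ 8π e^{αR} (1 - 2αR + 2α²R²)/(-α)³ + (32π/3) R³ e^{αδ}. -/
open MeasureTheory Metric Real

lemma aux_tendsto (α R : ℝ) (hα : α < 0) :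
    Filter.Tendsto (fun r : ℝ => Real.exp (α * (r - R)) * (r ^ 2 / α - 2 * r / α ^ 2 + 2 / α ^ 3))
      Filter.atTop (nhds 0) := by
  have h (s : ℝ) := tendsto_rpow_mul_exp_neg_mul_atTop_nhds_zero s (-α) (by linarith)
  have h2 := ((((h 2).div_const α).sub (((h 1).const_mul 2).div_const (α ^ 2))).add
    ((h 0).const_mul (2 / α ^ 3))).const_mul (Real.exp (-α * R))
  simp only [zero_div, mul_zero, sub_zero, add_zero] at h2
  refine h2.congr fun r => ?_
  have e : Real.exp (α * (r - R)) = Real.exp (-α * R) * Real.exp (- -α * r) := by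
    rw [← Real.exp_add]; congr 1; ring
  rw [e, Real.rpow_two, Real.rpow_one, Real.rpow_zero]
  ring

lemma aux_deriv (α R : ℝ) (hα : α < 0) (r : ℝ) :
    HasDerivAt (fun r : ℝ => Real.exp (α * (r - R)) * (r ^ 2 / α - 2 * r / α ^ 2 + 2 / α ^ 3))
      (r ^ 2 * Real.exp (α * (r - R))) r := by
  have h1 : HasDerivAt (fun r : ℝ => Real.exp (α * (r - R)))
      (Real.exp (α * (r - R)) * (α * 1)) r :=
    (((hasDerivAt_id r).sub_const R).const_mul α).exp
  have h2 : HasDerivAt (fun r : ℝ => r ^ 2 / α - 2 * r / α ^ 2 + 2 / α ^ 3)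
      ((2 * r) / α - 2 * 1 / α ^ 2) r := by
    have := (((hasDerivAt_pow 2 r).div_const α).sub
      (((hasDerivAt_id r).const_mul 2).div_const (α ^ 2))).add_const (2 / α ^ 3)
    simpa using this
  refine (h1.mul h2).congr_deriv ?_
  have : α ≠ 0 := hα.ne
  field_simp
  ring

lemma aux_int (α R : ℝ) (hα : α < 0) :
    IntegrableOn (fun r : ℝ => r ^ 2 * Real.exp (α * (r - R))) (Set.Ioi (2 * R)) ∧
    ∫ r in Set.Ioi (2 * R), r ^ 2 * Real.exp (α * (r - R)) =
      2 * Real.exp (α * R) * (1 - 2 * α * R + 2 * α ^ 2 * R ^ 2) / (-α) ^ 3 := by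
  have hd : ∀ x ∈ Set.Ici (2 * R), _ := fun x _ => aux_deriv α R hα x
  have hp : ∀ x ∈ Set.Ioi (2 * R), 0 ≤ x ^ 2 * Real.exp (α * (x - R)) :=
    fun x _ => by positivity
  refine ⟨integrableOn_Ioi_deriv_of_nonneg' hd hp (aux_tendsto α R hα), ?_⟩
  rw [integral_Ioi_of_hasDerivAt_of_nonneg' hd hp (aux_tendsto α R hα)]
  have : α ≠ 0 := hα.ne
  rw [show α * (2 * R - R) = α * R by ring, show (-α) ^ 3 = - α ^ 3 by ring]
  field_simp
  ring

/-- For a nonempty bounded `S ⊂ ℝ³` with `ε`-neighborhoods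
`Θ_ε = {x : dist(x,S) < ε}`, if `Θ₁` is contained in the ball of radius `R > 1`
about the origin, then for `δ ∈ (0,1]` and `α < 0`:
`∫_{ℝ³∖Θ_δ} e^{α·dist(x,S)} dx ≤ 8π e^{αR}(1-2αR+2α²R²)/(-α)³ + (32π/3)R³ e^{αδ}`. -/
theorem stmt_3
    (S : Set (EuclideanSpace ℝ (Fin 3)))
    (hS : S.Nonempty) (hSbdd : Bornology.IsBounded S)
    (Θ : ℝ → Set (EuclideanSpace ℝ (Fin 3)))
    (hΘ : ∀ ε, Θ ε = {x | infDist x S < ε})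
    (R : ℝ) (hR : 1 < R) (hΘR : Θ 1 ⊆ Metric.ball (0 : EuclideanSpace ℝ (Fin 3)) R)
    (δ : ℝ) (hδ : δ ∈ Set.Ioc (0 : ℝ) 1) (α : ℝ) (hα : α < 0) :
    ∫ x in (Θ δ)ᶜ, Real.exp (α * infDist x S) ≤
      8 * π * Real.exp (α * R) * (1 - 2 * α * R + 2 * α ^ 2 * R ^ 2) / (-α) ^ 3 +
        (32 * π / 3) * R ^ 3 * Real.exp (α * δ) := by
  classical
  obtain ⟨hδ0, hδ1⟩ := hδ
  set h : ℝ → ℝ := fun r => if r ≤ 2 * R then Real.exp (α * δ) else Real.exp (α * (r - R)) with hh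
  have hSR : ∀ y ∈ S, ‖y‖ < R := by
    intro y hy
    have : y ∈ Θ 1 := by
      rw [hΘ]; simp [infDist_zero_of_mem hy]
    simpa using hΘR this
  have hle : ∀ x, ‖x‖ - R ≤ infDist x S := by
    intro x
    refine (le_infDist hS).2 fun y hy => ?_
    have h1 := hSR y hy
    have h2 := norm_sub_norm_le x y
    rw [dist_eq_norm]; linarith
  obtain ⟨hi2, hv2⟩ := aux_int α R hα
  have hc1 : Set.EqOn (fun r : ℝ => r ^ 2 * h r) (fun r => r ^ 2 * Real.exp (α * δ))
      (Set.Ioc 0 (2 * R)) := by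
    intro r hr
    simp [hh, hr.2]
  have hc2 : Set.EqOn (fun r : ℝ => r ^ 2 * h r) (fun r => r ^ 2 * Real.exp (α * (r - R)))
      (Set.Ioi (2 * R)) := by
    intro r hr
    simp [hh, not_le.2 (Set.mem_Ioi.1 hr)]
  have hi1 : IntegrableOn (fun r : ℝ => r ^ 2 * Real.exp (α * δ)) (Set.Ioc 0 (2 * R)) :=
    (Continuous.integrableOn_Ioc (by fun_prop))
  have hi1' := hi1.congr_fun hc1.symm measurableSet_Ioc
  have hi2' := hi2.congr_fun hc2.symm measurableSet_Ioi
  have hR0 : (0 : ℝ) ≤ 2 * R := by linarith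
  have hun : Set.Ioc 0 (2 * R) ∪ Set.Ioi (2 * R) = Set.Ioi 0 := Set.Ioc_union_Ioi_eq_Ioi hR0
  have hint : IntegrableOn (fun r : ℝ => r ^ 2 * h r) (Set.Ioi 0) := by
    rw [← hun]; exact hi1'.union hi2'
  have hval : ∫ r in Set.Ioi (0 : ℝ), r ^ 2 * h r = (8 / 3) * R ^ 3 * Real.exp (α * δ) +
      2 * Real.exp (α * R) * (1 - 2 * α * R + 2 * α ^ 2 * R ^ 2) / (-α) ^ 3 := by
    rw [← hun, setIntegral_union (Set.Ioc_disjoint_Ioi le_rfl) measurableSet_Ioi hi1' hi2',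
      setIntegral_congr_fun measurableSet_Ioc hc1, setIntegral_congr_fun measurableSet_Ioi hc2, hv2,
      ← intervalIntegral.integral_of_le hR0, intervalIntegral.integral_mul_const, integral_pow]
    norm_num
    ring
  have hgint : Integrable (fun x : EuclideanSpace ℝ (Fin 3) => h ‖x‖) := by
    rw [integrable_fun_norm_addHaar]
    simpa using hint
  have hgval : ∫ x : EuclideanSpace ℝ (Fin 3), h ‖x‖ = 4 * π * ((8 / 3) * R ^ 3 * Real.exp (α * δ) +
      2 * Real.exp (α * R) * (1 - 2 * α * R + 2 * α ^ 2 * R ^ 2) / (-α) ^ 3) := by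
    rw [integral_fun_norm_addHaar, ← hval]
    have hb : (volume : Measure (EuclideanSpace ℝ (Fin 3))).real (ball 0 1) = π * 4 / 3 := by
      rw [Measure.real, EuclideanSpace.volume_ball_fin_three]
      simp [ENNReal.toReal_ofReal, Real.pi_pos.le, mul_nonneg, div_nonneg]
    rw [hb]
    simp
    ring
  have hmeas : MeasurableSet (Θ δ)ᶜ := by
    rw [hΘ]
    exact (measurableSet_lt measurable_infDist measurable_const).compl
  calc ∫ x in (Θ δ)ᶜ, Real.exp (α * infDist x S)
      = ∫ x, (Θ δ)ᶜ.indicator (fun x => Real.exp (α * infDist x S)) x :=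
        (integral_indicator hmeas).symm
    _ ≤ ∫ x : EuclideanSpace ℝ (Fin 3), h ‖x‖ := by
        refine integral_mono_of_nonneg (Filter.Eventually.of_forall fun x => ?_) hgint
          (Filter.Eventually.of_forall fun x => ?_)
        · exact Set.indicator_nonneg (fun _ _ => (Real.exp_pos _).le) x
        · have hpos : 0 ≤ h ‖x‖ := by
            simp only [hh]; split_ifs <;> positivity
          refine Set.indicator_apply_le' (fun hx => ?_) (fun _ => hpos)
          have hx' : δ ≤ infDist x S := by
            rw [hΘ] at hx; simpa using hx
          simp only [hh]
          split_ifs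
          · exact Real.exp_le_exp.2 (mul_le_mul_of_nonpos_left hx' hα.le)
          · exact Real.exp_le_exp.2 (mul_le_mul_of_nonpos_left (hle x) hα.le)
    _ = _ := by rw [hgval]; ring
end

section
/- For every real μ ≥ 2 and every real t with 0 < |t| ≤ 1 one has ∫₀^∞ (1/(r+|t|)) · ((r²+|t|)/(r²+t²)) · e^{-μr} · r dr ≤ e^{μ|t|} (1 - log|t|). -/
open MeasureTheory Real

lemma aux_pt (s r E : ℝ) (hs : 0 < s) (hs1 : s ≤ 1) (hr : 0 < r) (hE : 0 < E) (hE1 : E ≤ 1) :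
    (r + s)⁻¹ * ((r ^ 2 + s) / (r ^ 2 + s ^ 2)) * E * r ≤
      (1 - s) * (2 * r * s / (r + s) ^ 3) + E := by
  have h1 : (r + s)⁻¹ * ((r ^ 2 + s) / (r ^ 2 + s ^ 2)) * E * r =
      (r / (r + s)) * E + (1 - s) * (r * s / ((r + s) * (r ^ 2 + s ^ 2))) * E := by
    field_simp
    ring
  have h2 : r / (r + s) ≤ 1 := by rw [div_le_one (by positivity)]; linarith
  have h3 : r * s / ((r + s) * (r ^ 2 + s ^ 2)) ≤ 2 * r * s / (r + s) ^ 3 := by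
    rw [div_le_div_iff₀ (by positivity) (by positivity)]
    have : 0 ≤ r * s * (r + s) * (r - s) ^ 2 := by positivity
    nlinarith
  have h4 : 0 ≤ r * s / ((r + s) * (r ^ 2 + s ^ 2)) := by positivity
  have h5 : 0 ≤ (1 - s) := by linarith
  rw [h1]
  have h6 : (1 - s) * (r * s / ((r + s) * (r ^ 2 + s ^ 2))) * E ≤
      (1 - s) * (r * s / ((r + s) * (r ^ 2 + s ^ 2))) :=
    mul_le_of_le_one_right (mul_nonneg h5 h4) hE1
  have h7 := mul_le_mul_of_nonneg_left h3 h5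
  have h8 : r / (r + s) * E ≤ E := mul_le_of_le_one_left hE.le h2
  linarith

/-- For `μ ≥ 2` and `0 < |t| ≤ 1`:
`∫₀^∞ (1/(r+|t|)) · ((r²+|t|)/(r²+t²)) · e^{-μr} · r dr ≤ e^{μ|t|}(1 - log|t|)`. -/
theorem stmt_5 (μ t : ℝ) (hμ : 2 ≤ μ) (ht : 0 < |t|) (ht1 : |t| ≤ 1) :
    ∫ r in Set.Ioi (0 : ℝ),
        (r + |t|)⁻¹ * ((r ^ 2 + |t|) / (r ^ 2 + t ^ 2)) * Real.exp (-μ * r) * r ≤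
      Real.exp (μ * |t|) * (1 - Real.log |t|) := by
  rw [← sq_abs t]
  generalize |t| = s at *
  have hμ0 : 0 < μ := by linarith
  have hd : ∀ r ∈ Set.Ici (0:ℝ), HasDerivAt
      (fun r : ℝ => (1 - s) * (r / (r + s)) ^ 2 - Real.exp (-μ * r) / μ)
      ((1 - s) * (2 * r * s / (r + s) ^ 3) + Real.exp (-μ * r)) r := by
    intro r hr
    have hr : 0 ≤ r := hr
    have hne : r + s ≠ 0 := by positivity
    have a := ((((hasDerivAt_id r).div ((hasDerivAt_id r).add_const s) hne).pow 2).const_mul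
      (1 - s)).sub ((((hasDerivAt_id r).const_mul (-μ)).exp).div_const μ)
    refine HasDerivAt.congr_deriv a ?_
    simp
    field_simp
    ring
  have hpos : ∀ r ∈ Set.Ioi (0:ℝ),
      0 ≤ (1 - s) * (2 * r * s / (r + s) ^ 3) + Real.exp (-μ * r) := by
    intro r hr
    have hr : 0 < r := hr
    have h5 : 0 ≤ (1 - s) := by linarith
    positivity
  have hlim : Filter.Tendsto
      (fun r : ℝ => (1 - s) * (r / (r + s)) ^ 2 - Real.exp (-μ * r) / μ) Filter.atTop
      (nhds ((1 - s) * (1 - 0) ^ 2 - 0 / μ)) := by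
    refine Filter.Tendsto.sub (Filter.Tendsto.const_mul _ (Filter.Tendsto.pow ?_ 2))
      (Filter.Tendsto.div_const ?_ _)
    · have : Filter.Tendsto (fun r : ℝ => 1 - s / (r + s)) Filter.atTop (nhds (1 - 0)) :=
        tendsto_const_nhds.sub (Filter.Tendsto.const_div_atTop
          (Filter.tendsto_atTop_add_const_right _ _ Filter.tendsto_id) _)
      refine this.congr' ?_
      filter_upwards [Filter.eventually_gt_atTop 0] with r hr
      field_simp
      ring
    · exact Real.tendsto_exp_atBot.comp
        (Filter.Tendsto.const_mul_atTop_of_neg (by linarith) Filter.tendsto_id)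
  have hint := integrableOn_Ioi_deriv_of_nonneg' hd hpos hlim
  have hval := integral_Ioi_of_hasDerivAt_of_nonneg' hd hpos hlim
  have hle : ∫ r in Set.Ioi (0 : ℝ),
        (r + s)⁻¹ * ((r ^ 2 + s) / (r ^ 2 + s ^ 2)) * Real.exp (-μ * r) * r ≤
      ∫ r in Set.Ioi (0 : ℝ), ((1 - s) * (2 * r * s / (r + s) ^ 3) + Real.exp (-μ * r)) := by
    refine integral_mono_of_nonneg ?_ hint ?_
    · filter_upwards [ae_restrict_mem measurableSet_Ioi] with r hr
      have hr : 0 < r := hr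
      simp only [Pi.zero_apply]
      positivity
    · filter_upwards [ae_restrict_mem measurableSet_Ioi] with r hr
      have hr : 0 < r := hr
      exact aux_pt s r _ ht ht1 hr (Real.exp_pos _)
        (Real.exp_le_one_iff.2 (by nlinarith))
  rw [hval] at hle
  simp at hle
  have h1 : μ⁻¹ ≤ 1 := inv_le_one_of_one_le₀ (by linarith)
  have h2 := Real.log_le_sub_one_of_pos ht
  have h3 : 1 ≤ Real.exp (μ * s) := Real.one_le_exp (by positivity)
  have h4 : 1 * (1 - Real.log s) ≤ Real.exp (μ * s) * (1 - Real.log s) :=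
    mul_le_mul_of_nonneg_right h3 (by linarith)
  simp only [neg_mul] at hle ⊢
  linarith
end

section
/- For every real μ > 0 and every real t ≠ 0 one has ∫_{ℝ²} ((|z|²+|t|)/(|z|²+t²)) · e^{-μ|z|} dz ≤ 2π (μ+1)/μ², where |z| is the Euclidean norm on ℝ². -/
open MeasureTheory Real

/-- For `μ > 0` and `t ≠ 0`:
`∫_{ℝ²} ((|z|²+|t|)/(|z|²+t²)) · e^{-μ|z|} dz ≤ 2π(μ+1)/μ²`. -/
theorem stmt_6 (μ t : ℝ) (hμ : 0 < μ) (ht : t ≠ 0) :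
    ∫ z : EuclideanSpace ℝ (Fin 2),
        ((‖z‖ ^ 2 + |t|) / (‖z‖ ^ 2 + t ^ 2)) * Real.exp (-μ * ‖z‖) ≤
      2 * π * (μ + 1) / μ ^ 2 := by
  have h0 := integral_fun_norm_addHaar (volume : Measure (EuclideanSpace ℝ (Fin 2)))
    (fun r : ℝ => ((r ^ 2 + |t|) / (r ^ 2 + t ^ 2)) * Real.exp (-μ * r))
  have hv : (volume : Measure (EuclideanSpace ℝ (Fin 2))).real (Metric.ball 0 1) = π := by
    simp [Measure.real, Real.pi_pos.le]
  have i1 : IntegrableOn (fun r : ℝ => r * Real.exp (-μ * r)) (Set.Ioi 0) := by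
    have := integrableOn_rpow_mul_exp_neg_mul_rpow (s := 1) (p := 1) (b := μ) (by norm_num) (by norm_num) hμ
    simpa using this
  have i2 : IntegrableOn (fun r : ℝ => Real.exp (-μ * r)) (Set.Ioi 0) :=
    integrableOn_exp_mul_Ioi (by linarith) 0
  have e1 : ∫ r in Set.Ioi (0:ℝ), r * Real.exp (-μ * r) = 1 / μ ^ 2 := by
    have := Real.integral_rpow_mul_exp_neg_mul_Ioi (a := 2) (r := μ) (by norm_num) hμ
    have h : (2:ℝ) - 1 = 1 := by norm_num
    rw [h] at this
    simpa using this
  have e2 : ∫ r in Set.Ioi (0:ℝ), Real.exp (-μ * r) = 1 / μ := by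
    rw [integral_exp_mul_Ioi (by linarith) 0]
    simp
  have key : ∫ r in Set.Ioi (0:ℝ), r * (((r ^ 2 + |t|) / (r ^ 2 + t ^ 2)) * Real.exp (-μ * r))
      ≤ 1 / μ ^ 2 + 1 / μ := by
    rw [← e1, ← e2, ← integral_add i1 i2]
    apply integral_mono_of_nonneg
    · filter_upwards [ae_restrict_mem measurableSet_Ioi] with r hr
      have hr' : 0 < r := hr
      simp only [Pi.zero_apply]
      positivity
    · exact i1.add i2
    · filter_upwards [ae_restrict_mem measurableSet_Ioi] with r hr
      have hr' : 0 < r := hr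
      have : r * ((r ^ 2 + |t|) / (r ^ 2 + t ^ 2)) ≤ r + 1 := by
        rw [← mul_div_assoc, div_le_iff₀ (by positivity), ← sq_abs t]
        nlinarith [sq_nonneg (r - |t|), abs_nonneg t, mul_nonneg hr'.le (abs_nonneg t),
          mul_nonneg hr'.le (sq_nonneg |t|)]
      have := mul_le_mul_of_nonneg_right this (Real.exp_pos (-μ * r)).le
      linarith
  rw [h0, hv]
  simp only [finrank_euclideanSpace, Fintype.card_fin, smul_eq_mul, nsmul_eq_mul,
    Nat.add_one_sub_one, pow_one]
  have : 2 * π * (μ + 1) / μ ^ 2 = 2 * (π * (1 / μ ^ 2 + 1 / μ)) := by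
    field_simp
    ring
  rw [this]
  push_cast
  gcongr
end
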